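/- Let V be a real vector space with probabilistic norm ν satisfying (N1), and let f : V → V be a C-contraction with constant k ∈ (0,1). Then f has at most one fixed point, namely the null vector θ: if f p = p for some p ∈ V, then p = θ. Moreover, if f is a linear map, then θ is a fixed point of f, so f has exactly one fixed point. -/

import Mathlib

/-!
Call a radius `s > 0` good for `p` if `1 - s < ν p s`. When `p` has arbitrarily small good radii,
monotonicity forces `ν p = 1` on `(0, ∞)`, hence `p = 0` by (N1). A C-contraction turns good radii
`s` for `p` into good radii `k * s` for `f p`. Every radius is good for `0`, so `f 0 = 0`. Since `2`
is good for every point, a fixed point `p` has the good radii `k ^ n * 2`, so `p = 0`.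
-/

open Filter Function Set Topology

/-- `f` is a C-contraction with constant `k` for the probabilistic norm `ν`. The axioms on `ν`
and the bounds `0 < k < 1` are kept out of the predicate, so that it applies to any `ν` and `k`. -/
def IsCContraction {V : Type*} (ν : V → ℝ → ℝ) (k : ℝ) (f : V → V) : Prop :=
  ∀ p : V, ∀ t : ℝ, 0 < t → 1 - t < ν p t → 1 - k * t < ν (f p) (k * t)

theorem one_le_of_frequently_one_sub_lt {F : ℝ → ℝ} (hF : Monotone F)
    (h : ∃ᶠ s in 𝓝[>] 0, 1 - s < F s) {t : ℝ} (ht : 0 < t) : 1 ≤ F t := by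
  have hlim : Tendsto (fun s : ℝ ↦ 1 - s) (𝓝[>] 0) (𝓝 1) :=
    ((continuous_const.sub continuous_id).tendsto' 0 1 (sub_zero 1)).mono_left nhdsWithin_le_nhds
  have hsmall : ∀ᶠ s in 𝓝[>] (0 : ℝ), s < t := nhdsWithin_le_nhds (Iio_mem_nhds ht)
  exact le_of_tendsto_of_frequently hlim <|
    (h.and_eventually hsmall).mono fun s hs ↦ hs.1.le.trans (hF hs.2.le)

namespace IsCContraction

variable {V : Type*} {ν : V → ℝ → ℝ} {k : ℝ} {f : V → V}

theorem iterate (hf : IsCContraction ν k f) (hk : 0 < k) (n : ℕ) :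
    IsCContraction ν (k ^ n) f^[n] := by
  intro p t ht hpt
  induction n with
  | zero => simpa using hpt
  | succ n ih =>
    rw [iterate_succ_apply', pow_succ', mul_assoc]
    exact hf _ _ (by positivity) ih

theorem frequently_one_sub_lt_map (hf : IsCContraction ν k f) (hk : 0 < k) {p : V}
    (h : ∃ᶠ s in 𝓝[>] 0, 1 - s < ν p s) : ∃ᶠ s in 𝓝[>] 0, 1 - s < ν (f p) s := by
  have hlim : Tendsto (fun s : ℝ ↦ k * s) (𝓝[>] 0) (𝓝[>] 0) := by
    refine tendsto_nhdsWithin_iff.2 ⟨?_, eventually_mem_nhdsWithin.mono fun s hs ↦ mul_pos hk hs⟩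
    exact ((continuous_const_mul k).tendsto' 0 0 (mul_zero k)).mono_left nhdsWithin_le_nhds
  exact hlim.frequently <|
    (h.and_eventually eventually_mem_nhdsWithin).mono fun s hs ↦ hf p s hs.2 hs.1

theorem frequently_one_sub_lt_of_isFixedPt (hf : IsCContraction ν k f) (hk : k ∈ Ioo 0 1)
    {p : V} (hp : IsFixedPt f p) {t : ℝ} (ht : 0 < t) (hpt : 1 - t < ν p t) :
    ∃ᶠ s in 𝓝[>] 0, 1 - s < ν p s := by
  have hlim : Tendsto (fun n : ℕ ↦ k ^ n * t) atTop (𝓝[>] 0) := by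
    refine tendsto_nhdsWithin_iff.2 ⟨?_, .of_forall fun n ↦ mul_pos (pow_pos hk.1 n) ht⟩
    simpa using (tendsto_pow_atTop_nhds_zero_of_lt_one hk.1.le hk.2).mul_const t
  refine hlim.frequently <| .of_forall fun n ↦ ?_
  simpa only [(hp.iterate n).eq] using hf.iterate hk.1 n p t ht hpt

end IsCContraction

theorem c_contraction_fixed_point_general {V : Type*} [Zero V] {ν : V → ℝ → ℝ}
    (hmono : ∀ p, Monotone (ν p)) (hν : ∀ p t, ν p t ∈ Icc 0 1)
    (hN1 : ∀ p, (∀ t, 0 < t → ν p t = 1) ↔ p = 0) {k : ℝ} (hk : k ∈ Ioo 0 1) {f : V → V}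
    (hf : IsCContraction ν k f) (p : V) : f p = p ↔ p = 0 := by
  have eq_zero {q : V} (hq : ∃ᶠ s in 𝓝[>] 0, 1 - s < ν q s) : q = 0 :=
    (hN1 q).1 fun t ht ↦ (hν q t).2.antisymm (one_le_of_frequently_one_sub_lt (hmono q) hq ht)
  constructor
  · intro hp
    have hp_two : 1 - 2 < ν p 2 := by linarith [(hν p 2).1]
    exact eq_zero (hf.frequently_one_sub_lt_of_isFixedPt hk hp two_pos hp_two)
  · rintro rfl
    have hzero : ∀ᶠ s in 𝓝[>] 0, 1 - s < ν 0 s :=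
      eventually_mem_nhdsWithin.mono fun s hs ↦ by
        rw [(hN1 0).2 rfl s hs]
        exact sub_lt_self 1 hs
    exact eq_zero (hf.frequently_one_sub_lt_map hk.1 hzero.frequently)

/-- A C-contraction on a PN space has at most one fixed point, the null vector; if
moreover `f` is linear, then it has exactly one fixed point. -/
theorem c_contraction_fixed_point
    {V : Type*} [AddCommGroup V] [Module ℝ V] (ν : V → ℝ → ℝ)
    (hν : ∀ p : V, Monotone (ν p) ∧ (∀ t : ℝ, 0 ≤ ν p t ∧ ν p t ≤ 1) ∧
      (∀ t : ℝ, t ≤ 0 → ν p t = 0))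
    (hN1 : ∀ p : V, (∀ t : ℝ, 0 < t → ν p t = 1) ↔ p = 0)
    (k : ℝ) (hk : k ∈ Set.Ioo (0 : ℝ) 1) (f : V → V)
    (hf : ∀ p : V, ∀ t : ℝ, 0 < t → 1 - t < ν p t → 1 - k * t < ν (f p) (k * t)) :
    (∀ p : V, f p = p → p = 0) ∧ (IsLinearMap ℝ f → ∃! p : V, f p = p) := by
  have h := c_contraction_fixed_point_general (fun p ↦ (hν p).1) (fun p ↦ (hν p).2.1) hN1 hk hf
  exact ⟨fun p ↦ (h p).1, fun _ ↦ ⟨0, (h 0).2 rfl, fun p ↦ (h p).1⟩⟩
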